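/- For every positive integer n, the cost of the GKS game on n variables satisfies C(n) < 11 · n^(log 11 / log 165), where the exponent log 11 / log 165 is the base-165 logarithm of 11 (numerically about 0.4696), and the inequality is between real numbers. -/

import Mathlib

/-- The string produced in the GKS game on `n` variables when Eve reveals the
indices in the order `π 0, π 1, …, π (n-1)`, Alice plays according to
strategy `a` (which, given the nonempty list of indices revealed so far,
outputs the bit placed at the most recently revealed index) at the first
`n - 1` revealed indices, and Eve places the bit `b` at the last revealed
index `π (n-1)`. -/
def gksString (n : ℕ) (a : List (Fin n) → Bool) (π : Equiv.Perm (Fin n))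
    (b : Bool) : Fin n → Bool :=
  fun j =>
    if ((π.symm j : Fin n) : ℕ) = n - 1 then b
    else a (((List.finRange n).take (((π.symm j : Fin n) : ℕ) + 1)).map (⇑π))

/-- `(a, B)` is a `(k, n)` strategy for the GKS game: for every order `π` in
which Eve reveals the indices and every bit `b` placed by Eve at the last
revealed index `π (n-1)`, the resulting string `x` satisfies
`π (n-1) ∈ B x` and `(B x).card ≤ k`. -/
def IsGKSStrategy (k n : ℕ) (a : List (Fin n) → Bool)
    (B : (Fin n → Bool) → Finset (Fin n)) : Prop :=
  ∀ (π : Equiv.Perm (Fin n)) (b : Bool),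
    (∀ i : Fin n, (i : ℕ) = n - 1 → π i ∈ B (gksString n a π b)) ∧
    (B (gksString n a π b)).card ≤ k

/-- There exists a `(k, n)` strategy for the GKS game. -/
def HasGKSStrategy (k n : ℕ) : Prop :=
  ∃ (a : List (Fin n) → Bool) (B : (Fin n → Bool) → Finset (Fin n)),
    IsGKSStrategy k n a B

/-- The cost `C(n)` of the GKS game on `n` variables: the least `k` for which
a `(k, n)` strategy exists. -/
noncomputable def gksCost (n : ℕ) : ℕ :=
  sInf {k : ℕ | HasGKSStrategy k n}

/-!
Playing one game inside the blocks of another multiplies both the costs and the numbers of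
variables, and the number of variables may always be lowered. Hence cost `11` on `165` variables
gives cost `11 ^ j` on at most `165 ^ j` variables, and `165 ^ j < 165 * n` for the least suitable
`j`.

The `165` variables form `11` blocks of `15`. In each block Alice plays `0` at the set `D` of the
first four revealed indices and then follows a codeword `w D` of the `[15, 11]` Hamming code that
vanishes on `D`, except that she spoils the codeword with her last bit. If Eve's final bit spoils
the codeword of the last block too, the syndromes single out one candidate in each of the blocks.
Otherwise the last block is the only one that carries a codeword, and if `w` is injective Bob
recovers `D` and is left with `15 - 4 = 11` candidates.

An injective `w` exists by Hall's theorem: weighting the codewords by a function of their number of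
zeros gives a fractional matching between the sets `D` and the codewords vanishing on them. With a
cubic weight, its total at `D` only involves the numbers of codewords that vanish on given sets of
at most `4 + 3 < 16 / 2` coordinates, and these depend on nothing but the size of the set.
-/

namespace GKS

open Finset

variable {ι κ : Type*}

/-- An Alice strategy on an arbitrary index type, with bits in `ZMod 2`: `a p j` is the bit placed
at `j` when `p` is the list of the indices revealed before `j`, most recent first. -/
abbrev AliceStrategy (ι : Type*) := List ι → ι → ZMod 2

/-- `Follows a x l`: the string `x` carries the bits that `a` places when the indices of `l` are
revealed, the head of `l` being the most recent one. -/
def Follows (a : AliceStrategy ι) (x : ι → ZMod 2) : List ι → Prop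
  | [] => True
  | j :: p => x j = a p j ∧ Follows a x p

/-- A complete order of revelation, as a list. -/
def IsEnumeration (l : List ι) : Prop := l.Nodup ∧ ∀ i, i ∈ l

/-- Bob's set always contains the last index `c`, whatever bit Eve places there. -/
def Locates (a : AliceStrategy ι) (B : (ι → ZMod 2) → Finset ι) : Prop :=
  ∀ ⦃c q x⦄, IsEnumeration (c :: q) → Follows a x q → c ∈ B x

/-- The counterpart of `HasGKSStrategy k n` for an arbitrary index type. The bound on Bob's set is
imposed on all strings, reachable or not. -/
def HasStrategy (ι : Type*) (k : ℕ) : Prop :=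
  ∃ (a : AliceStrategy ι) (B : (ι → ZMod 2) → Finset ι), Locates a B ∧ ∀ x, #(B x) ≤ k

section Follows

variable {a : AliceStrategy ι} {x y : ι → ZMod 2} {l : List ι}

theorem Follows.congr (hx : Follows a x l) (hxy : ∀ j ∈ l, x j = y j) : Follows a y l := by
  induction l with
  | nil => trivial
  | cons j p ih =>
    rw [List.forall_mem_cons] at hxy
    exact ⟨hxy.1 ▸ hx.1, ih hx.2 hxy.2⟩

theorem Follows.eqOn (hx : Follows a x l) (hy : Follows a y l) : ∀ j ∈ l, x j = y j := by
  induction l with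
  | nil => simp
  | cons j p ih => exact List.forall_mem_cons.2 ⟨hx.1.trans hy.1.symm, ih hx.2 hy.2⟩

theorem exists_follows (a : AliceStrategy ι) (hl : l.Nodup) : ∃ x, Follows a x l := by
  classical
  induction l with
  | nil => exact ⟨0, trivial⟩
  | cons j p ih =>
    obtain ⟨hj, hp⟩ := List.nodup_cons.1 hl
    obtain ⟨x, hx⟩ := ih hp
    refine ⟨Function.update x j (a p j), by simp, hx.congr fun i hi ↦ ?_⟩
    rw [Function.update_of_ne (ne_of_mem_of_not_mem hi hj)]

theorem Follows.map_append {f : κ → ι} {e : List ι} (he : Follows a x e) {l : List κ}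
    (hl : Follows (fun p j ↦ a (p.map f ++ e) (f j)) (x ∘ f) l) : Follows a x (l.map f ++ e) := by
  induction l with
  | nil => exact he
  | cons j p ih => exact ⟨hl.1, ih hl.2⟩

theorem follows_reverse (h : ∀ (i : ℕ) (hi : i < l.length), x l[i] = a (l.take i).reverse l[i]) :
    Follows a x l.reverse := by
  induction l using List.reverseRecOn with
  | nil => trivial
  | append_singleton p j ih =>
    rw [List.reverse_append, List.reverse_singleton, List.singleton_append]
    refine ⟨by simpa using h p.length (by simp), ih fun i hi ↦ ?_⟩
    have hi' := h i (by simp; omega)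
    rwa [List.getElem_append_left hi, List.take_append_of_le_length hi.le] at hi'

end Follows

section IsEnumeration

variable {l : List ι}

theorem IsEnumeration.sum_map [Fintype ι] (hl : IsEnumeration l) {M : Type*} [AddCommMonoid M]
    (x : ι → M) : (l.map x).sum = ∑ i, x i := by
  classical
  rw [← List.sum_toFinset x hl.1]
  exact sum_congr (by ext; simp [hl.2]) fun _ _ ↦ rfl

theorem IsEnumeration.length_eq [Fintype ι] (hl : IsEnumeration l) :
    l.length = Fintype.card ι := by
  simpa using hl.sum_map fun _ ↦ (1 : ℕ)

theorem IsEnumeration.le_length [Fintype ι] {c : ι} {q : List ι} (h : IsEnumeration (c :: q))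
    {t : ℕ} (ht : t < Fintype.card ι) : t ≤ q.length := by
  simpa [← h.length_eq, Nat.lt_succ_iff] using ht

theorem IsEnumeration.mem_of_ne {c : ι} {q : List ι} (h : IsEnumeration (c :: q)) {j : ι}
    (hj : j ≠ c) : j ∈ q :=
  (List.mem_cons.1 (h.2 j)).resolve_left hj

theorem IsEnumeration.map_append {l : List κ} (hl : IsEnumeration l) {f : κ → ι}
    (hf : f.Injective) {e : List ι} (he : e.Nodup) (hef : ∀ i, i ∈ e ↔ i ∉ Set.range f) :
    IsEnumeration (l.map f ++ e) := by
  refine ⟨(hl.1.map hf).append he ?_, fun i ↦ List.mem_append.2 ?_⟩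
  · rintro _ hi
    obtain ⟨j, -, rfl⟩ := List.mem_map.1 hi
    simp [hef]
  · rw [hef]
    by_cases hi : i ∈ Set.range f
    · obtain ⟨j, rfl⟩ := hi
      exact .inl (List.mem_map_of_mem (hl.2 j))
    · exact .inr hi

end IsEnumeration

/-- Alice pretends that the indices outside the range of `f` were revealed at the very start. -/
theorem HasStrategy.of_embedding [Finite ι] {k : ℕ} (h : HasStrategy ι k) (f : κ ↪ ι) :
    HasStrategy κ k := by
  classical
  have := Fintype.ofFinite ι
  obtain ⟨a, B, hB, hk⟩ := h
  set e : List ι := (univ.filter fun i ↦ i ∉ Set.range f).toList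
  have he : e.Nodup := nodup_toList _
  have hef : ∀ i, i ∈ e ↔ i ∉ Set.range f := by simp [e]
  obtain ⟨x₀, hx₀⟩ := exists_follows a he
  refine ⟨fun p j ↦ a (p.map f ++ e) (f j),
    fun y ↦ (B (Function.extend f y x₀)).preimage f f.injective.injOn, ?_, fun y ↦ ?_⟩
  · intro c q y hcq hy
    refine mem_preimage.2 (hB (hcq.map_append f.injective he hef) (.map_append ?_ ?_))
    · exact hx₀.congr fun i hi ↦ (Function.extend_apply' _ _ _ ((hef i).1 hi)).symm
    · rwa [Function.extend_comp f.injective]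
  · rw [card_preimage]
    exact (card_filter_le _ _).trans (hk _)

section Composition

/-- The rule `u` steers `φ`: when `c` is the only index left, filling it with `u q c v` makes the
value of `φ` equal to `v`. -/
def IsSteeringRule (a : AliceStrategy ι) (φ : (ι → ZMod 2) → ZMod 2)
    (u : List ι → ι → ZMod 2 → ZMod 2) : Prop :=
  ∀ ⦃c q x v⦄, IsEnumeration (c :: q) → Follows a x q → x c = u q c v → φ x = v

/-- A strategy to be played inside the blocks of a composite game: Alice can steer the bit `φ x`
that a block contributes to the outer game, and Bob narrows a block contributing the bit `v` down
to `k v` indices. -/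
def HasSteeredStrategy (ι : Type*) (k : ZMod 2 → ℕ) : Prop :=
  ∃ (a : AliceStrategy ι) (B : (ι → ZMod 2) → Finset ι) (φ : (ι → ZMod 2) → ZMod 2)
    (u : List ι → ι → ZMod 2 → ZMod 2),
    Locates a B ∧ IsSteeringRule a φ u ∧ ∀ x, #(B x) ≤ k (φ x)

/-- A strategy for the outer game, in which an index carrying the bit `v` costs Bob `k v` instead
of `1`. -/
def HasWeightedStrategy (κ : Type*) (k : ZMod 2 → ℕ) (m : ℕ) : Prop :=
  ∃ (a : AliceStrategy κ) (B : (κ → ZMod 2) → Finset κ),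
    Locates a B ∧ ∀ z, ∑ b ∈ B z, k (z b) ≤ m

theorem HasStrategy.hasWeightedStrategy {m : ℕ} (h : HasStrategy κ m) (k : ℕ) :
    HasWeightedStrategy κ (fun _ ↦ k) (m * k) := by
  obtain ⟨a, B, hB, hm⟩ := h
  refine ⟨a, B, hB, fun z ↦ ?_⟩
  rw [sum_const, smul_eq_mul]
  exact Nat.mul_le_mul_right k (hm z)

/-- The steered bit is the parity of the string. -/
theorem HasStrategy.hasSteeredStrategy [Finite ι] {k : ℕ} (h : HasStrategy ι k) :
    HasSteeredStrategy ι fun _ ↦ k := by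
  have := Fintype.ofFinite ι
  obtain ⟨a, B, hB, hk⟩ := h
  choose! y hy using fun q : List ι ↦ exists_follows (l := q) a
  refine ⟨a, B, fun x ↦ ∑ i, x i, fun q _ v ↦ v - (q.map (y q)).sum, hB, ?_, hk⟩
  intro c q x v hcq hx hxc
  have hxy : q.map x = q.map (y q) :=
    List.map_congr_left (hx.eqOn (hy q (List.nodup_cons.1 hcq.1).2))
  change ∑ i, x i = v
  rw [← hcq.sum_map, List.map_cons, List.sum_cons, hxc, hxy, sub_add_cancel]

section Blocks

variable [DecidableEq κ]

/-- The part of the history `p` that concerns the block `b`. -/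
def blockHistory (b : κ) (p : List (κ × ι)) : List ι :=
  p.filterMap fun q ↦ if q.1 = b then some q.2 else none

@[simp]
theorem blockHistory_cons_self (b : κ) (i : ι) (p : List (κ × ι)) :
    blockHistory b ((b, i) :: p) = i :: blockHistory b p := by
  simp [blockHistory]

theorem blockHistory_cons_of_ne {b d : κ} (h : d ≠ b) (i : ι) (p : List (κ × ι)) :
    blockHistory b ((d, i) :: p) = blockHistory b p := by
  simp [blockHistory, h]

@[simp]
theorem mem_blockHistory {b : κ} {i : ι} {p : List (κ × ι)} :
    i ∈ blockHistory b p ↔ (b, i) ∈ p := by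
  simp [blockHistory]

theorem nodup_blockHistory (b : κ) {p : List (κ × ι)} (hp : p.Nodup) :
    (blockHistory b p).Nodup := by
  refine hp.filterMap fun q q' i hq hq' ↦ ?_
  simp only [Option.mem_def, Option.ite_none_right_eq_some, Option.some.injEq] at hq hq'
  exact Prod.ext (hq.1.trans hq'.1.symm) (hq.2.trans hq'.2.symm)

/-- Revealing `q` after the history `p` exhausts the block of `q`. -/
def CompletesBlock (p : List (κ × ι)) (q : κ × ι) : Prop :=
  ∀ i, i ∈ q.2 :: blockHistory q.1 p

theorem CompletesBlock.isEnumeration {p : List (κ × ι)} {b : κ} {i : ι}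
    (h : CompletesBlock p (b, i)) (hp : ((b, i) :: p).Nodup) :
    IsEnumeration (i :: blockHistory b p) :=
  ⟨by simpa using nodup_blockHistory b hp, h⟩

open Classical in
/-- The blocks exhausted by the history `p`, the most recently completed one first. -/
noncomputable def completedBlocks : List (κ × ι) → List κ
  | [] => []
  | q :: p => if CompletesBlock p q then q.1 :: completedBlocks p else completedBlocks p

theorem mem_completedBlocks [Nonempty ι] {b : κ} {p : List (κ × ι)} :
    b ∈ completedBlocks p ↔ ∀ i, (b, i) ∈ p := by
  induction p with
  | nil => simp [completedBlocks]
  | cons q p ih =>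
    obtain ⟨d, j⟩ := q
    rw [completedBlocks]
    rcases eq_or_ne d b with rfl | hdb
    · split_ifs with h
      · simpa [CompletesBlock] using h
      · rw [ih]
        refine ⟨fun hp i ↦ List.mem_cons_of_mem _ (hp i), fun hp ↦ (h fun i ↦ ?_).elim⟩
        simpa using hp i
    · split_ifs <;> simp [ih, hdb.symm]

theorem nodup_completedBlocks [Nonempty ι] {p : List (κ × ι)} (hp : p.Nodup) :
    (completedBlocks p).Nodup := by
  induction p with
  | nil => exact List.nodup_nil
  | cons q p ih =>
    obtain ⟨hq, hp⟩ := List.nodup_cons.1 hp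
    rw [completedBlocks]
    split_ifs
    · exact List.nodup_cons.2 ⟨fun h ↦ hq (mem_completedBlocks.1 h q.2), ih hp⟩
    · exact ih hp

open Classical in
/-- Alice plays `a₂` inside each block, except that the last bit of a block steers the bit that the
block contributes to the outer game to the one prescribed by `a₁`. -/
noncomputable def compose (a₁ : AliceStrategy κ) (a₂ : AliceStrategy ι)
    (u : List ι → ι → ZMod 2 → ZMod 2) : AliceStrategy (κ × ι) := fun p q ↦
  if CompletesBlock p q then u (blockHistory q.1 p) q.2 (a₁ (completedBlocks p) q.1)
  else a₂ (blockHistory q.1 p) q.2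

variable {a₁ : AliceStrategy κ} {a₂ : AliceStrategy ι} {u : List ι → ι → ZMod 2 → ZMod 2}
  {x : κ × ι → ZMod 2} {p : List (κ × ι)}

theorem Follows.blockHistory (h : Follows (compose a₁ a₂ u) x p) {b : κ} {i : ι}
    (hi : i ∉ blockHistory b p) : Follows a₂ (fun j ↦ x (b, j)) (blockHistory b p) := by
  induction p with
  | nil => trivial
  | cons q p ih =>
    obtain ⟨d, j⟩ := q
    rcases eq_or_ne d b with rfl | hdb
    · rw [blockHistory_cons_self] at hi ⊢
      have hincomplete : ¬ CompletesBlock p (d, j) := fun hc ↦ hi (hc i)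
      exact ⟨h.1.trans (if_neg hincomplete), ih h.2 (List.not_mem_of_not_mem_cons hi)⟩
    · rw [blockHistory_cons_of_ne hdb] at hi ⊢
      exact ih h.2 hi

theorem Follows.completedBlocks {φ : (ι → ZMod 2) → ZMod 2} (hu : IsSteeringRule a₂ φ u)
    (hp : p.Nodup) (h : Follows (compose a₁ a₂ u) x p) :
    Follows a₁ (fun b ↦ φ fun i ↦ x (b, i)) (completedBlocks p) := by
  induction p with
  | nil => trivial
  | cons q p ih =>
    obtain ⟨b, i⟩ := q
    have ih := ih (List.nodup_cons.1 hp).2 h.2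
    rw [GKS.completedBlocks]
    split_ifs with hc
    · have henum := hc.isEnumeration hp
      have hlast := h.1.trans (if_pos hc)
      exact ⟨hu henum (h.2.blockHistory (List.nodup_cons.1 henum.1).1) hlast, ih⟩
    · exact ih

end Blocks

theorem HasWeightedStrategy.prod {k : ZMod 2 → ℕ} {m : ℕ} (h₁ : HasWeightedStrategy κ k m)
    (h₂ : HasSteeredStrategy ι k) : HasStrategy (κ × ι) m := by
  classical
  obtain ⟨a₁, B₁, hB₁, hm⟩ := h₁
  obtain ⟨a₂, B₂, φ, u, hB₂, hu, hk⟩ := h₂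
  refine ⟨compose a₁ a₂ u, fun x ↦ (B₁ fun b ↦ φ fun i ↦ x (b, i)).biUnion fun b ↦
    (B₂ fun i ↦ x (b, i)).image (Prod.mk b), ?_, fun x ↦ ?_⟩
  · rintro ⟨b, i⟩ p x hp hx
    have : Nonempty ι := ⟨i⟩
    have hcompletes : CompletesBlock p (b, i) := fun j ↦ by simpa using hp.2 (b, j)
    have hinner := hcompletes.isEnumeration hp.1
    have houter : IsEnumeration (b :: completedBlocks p) := by
      have h : completedBlocks ((b, i) :: p) = b :: completedBlocks p := if_pos hcompletes
      exact h ▸ ⟨nodup_completedBlocks hp.1, fun d ↦ mem_completedBlocks.2 fun j ↦ hp.2 (d, j)⟩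
    simp only [mem_biUnion, mem_image]
    exact ⟨b, hB₁ houter (hx.completedBlocks hu (List.nodup_cons.1 hp.1).2),
      i, hB₂ hinner (hx.blockHistory (List.nodup_cons.1 hinner.1).1), rfl⟩
  · calc _ ≤ ∑ b ∈ B₁ fun b ↦ φ fun i ↦ x (b, i), #((B₂ fun i ↦ x (b, i)).image (Prod.mk b)) :=
          card_biUnion_le
      _ ≤ ∑ b ∈ B₁ fun b ↦ φ fun i ↦ x (b, i), k (φ fun i ↦ x (b, i)) :=
          sum_le_sum fun b _ ↦ card_image_le.trans (hk _)
      _ ≤ m := hm _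

theorem HasStrategy.pow [Finite ι] {k : ℕ} (h : HasStrategy ι k) (j : ℕ) :
    HasStrategy (Fin j → ι) (k ^ j) := by
  induction j with
  | zero => exact ⟨0, fun _ ↦ univ, fun _ _ _ _ _ ↦ mem_univ _, by simp⟩
  | succ j ih =>
    have hprod : HasStrategy ((Fin j → ι) × ι) (k ^ j * k) :=
      (ih.hasWeightedStrategy k).prod h.hasSteeredStrategy
    let split : (Fin (j + 1) → ι) ≃ (Fin j → ι) × ι :=
      (Fin.snocEquiv fun _ ↦ ι).symm.trans (Equiv.prodComm _ _)
    exact pow_succ k j ▸ hprod.of_embedding split.toEmbedding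

end Composition

section GKSString

theorem take_finRange_succ {n : ℕ} (i : Fin n) :
    (List.finRange n).take (i + 1) = (List.finRange n).take i ++ [i] := by
  rw [List.take_succ_eq_append_getElem (by simp), List.getElem_finRange]
  simp

theorem HasStrategy.hasGKSStrategy {n k : ℕ} (hn : 0 < n) (h : HasStrategy (Fin n) k) :
    HasGKSStrategy k n := by
  obtain ⟨a, B, hB, hk⟩ := h
  let ofBool (s : Fin n → Bool) (j : Fin n) : ZMod 2 := if s j then 1 else 0
  let a' : List (Fin n) → Bool := fun l ↦ match l.reverse with
    | [] => false
    | j :: p => decide (a p j = 1)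
  have ha' (p : List (Fin n)) (j : Fin n) : a' (p ++ [j]) = decide (a p.reverse j = 1) := by
    simp [a']
  have hbit : ∀ v : ZMod 2, (if decide (v = 1) then 1 else 0) = v := by decide
  refine ⟨a', fun s ↦ B (ofBool s), fun π b ↦ ⟨fun i hi ↦ ?_, hk _⟩⟩
  set l : List (Fin n) := ((List.finRange n).take i).map π with hl
  have henum : IsEnumeration (π i :: l.reverse) := by
    have hall : l ++ [π i] = (List.finRange n).map π := by
      rw [hl, ← List.map_singleton, ← List.map_append, ← take_finRange_succ, hi,
        Nat.sub_add_cancel hn, List.take_of_length_le (by simp)]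
    rw [← List.reverse_concat, hall]
    exact ⟨List.nodup_reverse.2 ((List.nodup_finRange n).map π.injective),
      fun j ↦ by simpa using ⟨_, π.apply_symm_apply j⟩⟩
  refine hB henum (follows_reverse fun m hm ↦ ?_)
  have hmi : m < i := by simpa [l] using hm
  have hlm : l[m] = π ⟨m, hmi.trans i.2⟩ := by simp [l]
  have htake : l.take m = ((List.finRange n).take m).map π := by
    rw [hl, ← List.map_take, List.take_take, min_eq_left hmi.le]
  have hstring : gksString n a' π b l[m] = decide (a (l.take m).reverse l[m] = 1) := by
    rw [gksString, hlm, π.symm_apply_apply, if_neg (hi ▸ hmi.ne), take_finRange_succ,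
      List.map_append, List.map_singleton, ha', htake]
  simp only [ofBool, hstring, hbit]

end GKSString

theorem eq_zero_or_eq_one : ∀ v : ZMod 2, v = 0 ∨ v = 1 := by decide

/-- Alice plays `0` throughout the outer game. -/
theorem hasWeightedStrategy_of_card [Fintype κ] {k : ZMod 2 → ℕ} {m : ℕ}
    (h₀ : Fintype.card κ * k 0 ≤ m) (h₁ : k 1 ≤ m) : HasWeightedStrategy κ k m := by
  classical
  have eq_zero_of_follows {z : κ → ZMod 2} {q : List κ} (h : Follows (fun _ _ ↦ 0) z q) :
      ∀ b ∈ q, z b = 0 := by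
    induction q with
    | nil => simp
    | cons b p ih => exact List.forall_mem_cons.2 ⟨h.1, ih h.2⟩
  refine ⟨fun _ _ ↦ 0, fun z ↦ univ.filter fun b ↦ ∀ d ≠ b, z d = 0, ?_, fun z ↦ ?_⟩
  · intro b q z hbq hz
    exact (mem_filter_univ _).2 fun d hd ↦ eq_zero_of_follows hz d (hbq.mem_of_ne hd)
  · by_cases hz : ∃ b, z b = 1
    · obtain ⟨b, hb⟩ := hz
      have hsub : (univ.filter fun b ↦ ∀ d ≠ b, z d = 0) ⊆ {b} := by
        intro d hd
        by_contra hdb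
        have hb0 := (mem_filter_univ _).1 hd b (Ne.symm (mem_singleton.not.1 hdb))
        exact zero_ne_one (hb0.symm.trans hb)
      calc ∑ d with ∀ i ≠ d, z i = 0, k (z d) ≤ ∑ d ∈ {b}, k (z d) := sum_le_sum_of_subset hsub
        _ = k 1 := by rw [sum_singleton, hb]
        _ ≤ m := h₁
    · have hz (d) : z d = 0 := (eq_zero_or_eq_one (z d)).resolve_right fun h ↦ hz ⟨d, h⟩
      simpa [hz] using h₀

section Commit

variable [DecidableEq ι]

/-- The set of the first `t` revealed indices; these stand at the end of the history `q`. -/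
def firstRevealed (t : ℕ) (q : List ι) : Finset ι := (q.rtake t).toFinset

/-- Alice plays `0` at the first `t` revealed indices, and then the bits of the string `w D`, where
`D` is the set of these `t` indices. -/
def commit (t : ℕ) (w : Finset ι → ι → ZMod 2) : AliceStrategy ι := fun q ↦
  if q.length < t then 0 else w (firstRevealed t q)

variable {t : ℕ} {w : Finset ι → ι → ZMod 2} {x : ι → ZMod 2} {q : List ι}

theorem mem_of_mem_firstRevealed {j : ι} (hj : j ∈ firstRevealed t q) : j ∈ q :=
  List.mem_of_mem_drop (List.mem_toFinset.1 hj)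

theorem card_firstRevealed (hq : q.Nodup) (ht : t ≤ q.length) : #(firstRevealed t q) = t := by
  have hrtake : (q.rtake t).Nodup := hq.sublist (List.drop_sublist _ _)
  rw [firstRevealed, List.toFinset_card_of_nodup hrtake, List.rtake, List.length_drop,
    Nat.sub_sub_self ht]

theorem firstRevealed_cons_of_le {j : ι} (ht : t ≤ q.length) :
    firstRevealed t (j :: q) = firstRevealed t q := by
  rw [firstRevealed, firstRevealed, List.rtake, List.rtake, List.length_cons, Nat.succ_sub ht,
    List.drop_succ_cons]

theorem Follows.eq_zero_of_length_le (h : Follows (commit t w) x q) (hq : q.length ≤ t) :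
    ∀ j ∈ q, x j = 0 := by
  induction q with
  | nil => simp
  | cons j p ih =>
    have hp : p.length < t := hq
    refine List.forall_mem_cons.2 ⟨h.1.trans ?_, ih h.2 hp.le⟩
    rw [commit, if_pos hp, Pi.zero_apply]

theorem Follows.eq_commit (h : Follows (commit t w) x q) (hq : q.Nodup) (ht : t ≤ q.length)
    (hw : ∀ D, #D = t → ∀ j ∈ D, w D j = 0) : ∀ j ∈ q, x j = w (firstRevealed t q) j := by
  induction q with
  | nil => simp
  | cons j p ih =>
    rcases ht.eq_or_lt with rfl | ht
    · intro i hi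
      have hi' : i ∈ firstRevealed (j :: p).length (j :: p) := by
        simpa [firstRevealed, List.rtake] using hi
      rw [h.eq_zero_of_length_le le_rfl i hi, hw _ (card_firstRevealed hq le_rfl) i hi']
    · have ht : t ≤ p.length := Nat.lt_succ_iff.1 ht
      rw [firstRevealed_cons_of_le ht]
      refine List.forall_mem_cons.2 ⟨h.1.trans ?_, ih h.2 (List.nodup_cons.1 hq).2 ht⟩
      rw [commit, if_neg ht.not_gt]

end Commit

/-- The set of coordinates at which `x` vanishes. -/
def zeros [Fintype ι] (x : ι → ZMod 2) : Finset ι := {j | x j = 0}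

theorem subset_zeros [Fintype ι] {x : ι → ZMod 2} {D : Finset ι} :
    D ⊆ zeros x ↔ ∀ j ∈ D, x j = 0 := by
  simp [zeros, subset_iff]

theorem eq_add_single [DecidableEq ι] {x y : ι → ZMod 2} {c : ι} (h : ∀ j, j ≠ c → x j = y j) :
    x = y + Pi.single c (x c - y c) := by
  ext j
  rcases eq_or_ne j c with rfl | hj
  · simp
  · simp [h j hj, hj]

/-- The fractional matching gives every edge at `b` the weight `u b / N`, which turns Hall's
condition into a double count. -/
theorem exists_injective_of_fractional_matching {α β R : Type*} [Fintype α] [DecidableEq β]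
    [Ring R] [LinearOrder R] [IsStrictOrderedRing R] (t : α → Finset β) (u : β → R) {N : R}
    (hN : 0 < N) (hleft : ∀ a, N ≤ ∑ b ∈ t a, u b) (hright : ∀ b, #{a | b ∈ t a} * u b ≤ N) :
    ∃ f : α → β, f.Injective ∧ ∀ a, f a ∈ t a := by
  refine (all_card_le_biUnion_card_iff_exists_injective t).1 fun s ↦ ?_
  have hright_s (b : β) : #{a ∈ s | b ∈ t a} * u b ≤ N := by
    rcases le_total 0 (u b) with hu | hu
    · refine (mul_le_mul_of_nonneg_right ?_ hu).trans (hright b)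
      exact_mod_cast card_le_card (filter_subset_filter _ s.subset_univ)
    · exact (mul_nonpos_of_nonneg_of_nonpos (Nat.cast_nonneg _) hu).trans hN.le
  have hweight : #s * N ≤ #(s.biUnion t) * N :=
    calc #s * N = ∑ _a ∈ s, N := by rw [sum_const, nsmul_eq_mul]
      _ ≤ ∑ a ∈ s, ∑ b ∈ t a, u b := sum_le_sum fun _ _ ↦ hleft _
      _ = ∑ b ∈ s.biUnion t, ∑ a ∈ s with b ∈ t a, u b := sum_comm' (by simp; tauto)
      _ = ∑ b ∈ s.biUnion t, #{a ∈ s | b ∈ t a} * u b := by simp only [sum_const, nsmul_eq_mul]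
      _ ≤ ∑ _b ∈ s.biUnion t, N := sum_le_sum fun _ _ ↦ hright_s _
      _ = #(s.biUnion t) * N := by rw [sum_const, nsmul_eq_mul]
  exact_mod_cast le_of_mul_le_mul_right hweight hN

section Hamming

/-- The coordinates of the Hamming code with syndromes in `V`: the columns of its parity check
matrix are the nonzero elements of `V`. -/
abbrev Coord (V : Type*) [Zero V] := {v : V // v ≠ 0}

theorem card_coord (V : Type*) [Fintype V] [DecidableEq V] [Zero V] :
    Fintype.card (Coord V) = Fintype.card V - 1 := by
  simp [Fintype.card_subtype_compl]

variable {V : Type*} [Fintype V] [DecidableEq V] [AddCommGroup V] [Module (ZMod 2) V]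

/-- The syndrome map of the Hamming code; its kernel is the code. -/
noncomputable def syndrome : (Coord V → ZMod 2) →ₗ[ZMod 2] V :=
  Fintype.linearCombination (ZMod 2) Subtype.val

theorem syndrome_single (c : Coord V) (v : ZMod 2) : syndrome (Pi.single c v) = v • (c : V) := by
  rw [syndrome, Fintype.linearCombination_apply_single]

/-- `w` assigns distinct Hamming codewords to the sets of `t` coordinates, the codeword of each set
vanishing on it. -/
structure IsCommitment (t : ℕ) (w : Finset (Coord V) → Coord V → ZMod 2) : Prop where
  injOn : Set.InjOn w {D | #D = t}
  syndrome_eq_zero : ∀ ⦃D⦄, #D = t → syndrome (w D) = 0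
  eq_zero_of_mem : ∀ ⦃D⦄, #D = t → ∀ j ∈ D, w D j = 0

variable {t : ℕ} {w : Finset (Coord V) → Coord V → ZMod 2}

open Classical in
/-- Bob outputs the coordinate at which `x` differs from a codeword, or, if `x` is itself the
codeword to which Alice committed, all the coordinates outside the set that determined it. -/
noncomputable def candidates (t : ℕ) (w : Finset (Coord V) → Coord V → ZMod 2)
    (x : Coord V → ZMod 2) : Finset (Coord V) :=
  univ.filter fun c ↦ syndrome x = c ∨ ∃ D, #D = t ∧ w D = x ∧ c ∉ D

theorem mem_candidates {x : Coord V → ZMod 2} {c : Coord V} :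
    c ∈ candidates t w x ↔ syndrome x = c ∨ ∃ D, #D = t ∧ w D = x ∧ c ∉ D := by
  rw [candidates, mem_filter_univ]

section FollowsCommit

variable {c : Coord V} {q : List (Coord V)} {x : Coord V → ZMod 2}

theorem IsCommitment.eq_add_single (hw : IsCommitment t w) (ht : t < Fintype.card (Coord V))
    (hcq : IsEnumeration (c :: q)) (hx : Follows (commit t w) x q) :
    x = w (firstRevealed t q) + Pi.single c (x c - w (firstRevealed t q) c) :=
  GKS.eq_add_single fun j hj ↦ hx.eq_commit (List.nodup_cons.1 hcq.1).2 (hcq.le_length ht)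
    hw.eq_zero_of_mem j (hcq.mem_of_ne hj)

theorem IsCommitment.syndrome_eq (hw : IsCommitment t w) (ht : t < Fintype.card (Coord V))
    (hcq : IsEnumeration (c :: q)) (hx : Follows (commit t w) x q) :
    syndrome x = (x c - w (firstRevealed t q) c) • (c : V) := by
  have hcard := card_firstRevealed (List.nodup_cons.1 hcq.1).2 (hcq.le_length ht)
  conv_lhs => rw [hw.eq_add_single ht hcq hx, map_add, hw.syndrome_eq_zero hcard, syndrome_single,
    zero_add]

end FollowsCommit

theorem IsCommitment.locates (hw : IsCommitment t w) (ht : t < Fintype.card (Coord V)) :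
    Locates (commit t w) (candidates t w) := by
  intro c q x hcq hx
  rw [mem_candidates]
  rcases eq_zero_or_eq_one (x c - w (firstRevealed t q) c) with h | h
  · obtain ⟨hc, hq⟩ := List.nodup_cons.1 hcq.1
    have hxw := hw.eq_add_single ht hcq hx
    rw [h, Pi.single_zero, add_zero] at hxw
    exact .inr ⟨_, card_firstRevealed hq (hcq.le_length ht), hxw.symm,
      fun hcD ↦ hc (mem_of_mem_firstRevealed hcD)⟩
  · exact .inl (by rw [hw.syndrome_eq ht hcq hx, h, one_smul])

theorem IsCommitment.card_candidates_le (hw : IsCommitment t w) (x : Coord V → ZMod 2) :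
    #(candidates t w x) ≤ if syndrome x = 0 then Fintype.card (Coord V) - t else 1 := by
  split_ifs with hx
  · by_cases hcommit : ∃ D, #D = t ∧ w D = x
    · obtain ⟨D, hD, rfl⟩ := hcommit
      have hcard : #Dᶜ = Fintype.card (Coord V) - t := by rw [card_compl, hD]
      refine (card_le_card fun c hc ↦ mem_compl.2 ?_).trans_eq hcard
      obtain hcx | ⟨D', hD', hDD', hcD'⟩ := mem_candidates.1 hc
      · exact absurd (hcx.symm.trans hx) c.2
      · exact hw.injOn hD' hD hDD' ▸ hcD'
    · refine (card_eq_zero.2 (filter_eq_empty_iff.2 fun c _ ↦ ?_)).trans_le (Nat.zero_le _)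
      rintro (hcx | ⟨D, hD, hDx, -⟩)
      · exact c.2 (hcx.symm.trans hx)
      · exact hcommit ⟨D, hD, hDx⟩
  · refine card_le_one.2 fun c hc d hd ↦ Subtype.ext ?_
    have syndrome_eq {c} (hc : c ∈ candidates t w x) : syndrome x = c := by
      obtain hcx | ⟨D, hD, rfl, -⟩ := mem_candidates.1 hc
      · exact hcx
      · exact absurd (hw.syndrome_eq_zero hD) hx
    exact (syndrome_eq hc).symm.trans (syndrome_eq hd)

/-- The steered bit tells whether `x` is a codeword. -/
theorem IsCommitment.hasSteeredStrategy (hw : IsCommitment t w) (ht : t < Fintype.card (Coord V)) :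
    HasSteeredStrategy (Coord V) fun v ↦ if v = 1 then Fintype.card (Coord V) - t else 1 := by
  refine ⟨commit t w, candidates t w, fun x ↦ if syndrome x = 0 then 1 else 0,
    fun q c v ↦ w (firstRevealed t q) c + (1 - v), hw.locates ht, ?_, fun x ↦ ?_⟩
  · intro c q x v hcq hx hxc
    have hsyndrome : syndrome x = (1 - v) • (c : V) := by
      rw [hw.syndrome_eq ht hcq hx, hxc, add_sub_cancel_left]
    rcases eq_zero_or_eq_one v with rfl | rfl <;> simp [hsyndrome, c.2]
  · refine (hw.card_candidates_le x).trans_eq ?_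
    split_ifs <;> simp_all

/-- The Hamming codewords that vanish on `D`. -/
noncomputable def shortenedCode (D : Finset (Coord V)) : Finset (Coord V → ZMod 2) :=
  {x | syndrome x = 0 ∧ D ⊆ zeros x}

theorem mem_shortenedCode {D : Finset (Coord V)} {x : Coord V → ZMod 2} :
    x ∈ shortenedCode D ↔ syndrome x = 0 ∧ D ⊆ zeros x :=
  mem_filter_univ _

theorem exists_syndrome_eq {T : Finset (Coord V)} (hT : 2 * #T < Fintype.card V) (v : V) :
    ∃ x, T ⊆ zeros x ∧ syndrome x = v := by
  set A : Finset V := (T.map (.subtype _))ᶜ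
  have exists_of_mem {a : V} (ha : a ∈ A) : ∃ x, T ⊆ zeros x ∧ syndrome x = a := by
    by_cases ha0 : a = 0
    · exact ⟨0, by simp [subset_zeros], by rw [map_zero, ha0]⟩
    · refine ⟨Pi.single ⟨a, ha0⟩ 1, subset_zeros.2 fun j hj ↦ Pi.single_eq_of_ne ?_ 1, ?_⟩
      · rintro rfl
        simp [A, ha0, hj] at ha
      · rw [syndrome_single, one_smul]
  have hA : Fintype.card V < #A + #(A.image (v - ·)) := by
    rw [card_image_of_injective _ sub_right_injective, card_compl, card_map]
    omega
  obtain ⟨a, ha⟩ := inter_nonempty_of_card_lt_card_add_card (subset_univ A) (subset_univ _) hA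
  obtain ⟨haA, hav⟩ := mem_inter.1 ha
  obtain ⟨b, hb, rfl⟩ := mem_image.1 hav
  obtain ⟨x, hxT, hx⟩ := exists_of_mem haA
  obtain ⟨y, hyT, hy⟩ := exists_of_mem hb
  refine ⟨x + y, subset_zeros.2 fun j hj ↦ ?_, by rw [map_add, hx, hy, sub_add_cancel]⟩
  rw [Pi.add_apply, subset_zeros.1 hxT j hj, subset_zeros.1 hyT j hj, add_zero]

theorem card_shortenedCode {T : Finset (Coord V)} (hT : 2 * #T < Fintype.card V) :
    #(shortenedCode T) * (2 ^ #T * Fintype.card V) = 2 ^ Fintype.card (Coord V) := by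
  set f : (Coord V → ZMod 2) →ₗ[ZMod 2] (T → ZMod 2) × V :=
    (LinearMap.funLeft (ZMod 2) (ZMod 2) Subtype.val).prod syndrome
  have hf : Function.Surjective f := by
    rintro ⟨r, v⟩
    set x₀ : Coord V → ZMod 2 := Function.extend Subtype.val r 0
    obtain ⟨x, hxT, hx⟩ := exists_syndrome_eq hT (v - syndrome x₀)
    refine ⟨x₀ + x, Prod.ext (funext fun j ↦ ?_) ?_⟩
    · have hx₀ : x₀ j = r j := Subtype.val_injective.extend_apply r 0 j
      change x₀ j + x j = r j
      rw [subset_zeros.1 hxT j j.2, add_zero, hx₀]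
    · change syndrome (x₀ + x) = v
      rw [map_add, hx, add_sub_cancel]
  have hker : Nat.card f.toAddMonoidHom.ker = #(shortenedCode T) := by
    refine Nat.subtype_card _ fun x ↦ ?_
    have hfx : f x = 0 ↔ (fun j : T ↦ x j) = 0 ∧ syndrome x = 0 := Prod.ext_iff
    simp [mem_shortenedCode, subset_zeros, hfx, funext_iff, and_comm]
  have hindex := f.toAddMonoidHom.ker.card_mul_index
  rw [hker, AddSubgroup.index_ker, AddMonoidHom.range_eq_top.2 hf] at hindex
  simpa using hindex

theorem sum_choose_card_zeros (D : Finset (Coord V)) (i : ℕ) :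
    ∑ x ∈ shortenedCode D, (#(zeros x) - #D).choose i =
      ∑ T ∈ powersetCard i Dᶜ, #(shortenedCode (D ∪ T)) := by
  have hzeros {x} (hx : x ∈ shortenedCode D) :
      (#(zeros x) - #D).choose i = #{T ∈ powersetCard i Dᶜ | T ⊆ zeros x} := by
    rw [← card_sdiff_of_subset (mem_shortenedCode.1 hx).2, ← card_powersetCard]
    congr 1
    ext T
    simp only [mem_powersetCard, mem_filter, subset_sdiff, subset_compl_iff_disjoint_right]
    tauto
  have hcode (T : Finset (Coord V)) :
      {x ∈ shortenedCode D | T ⊆ zeros x} = shortenedCode (D ∪ T) := by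
    ext x
    simp only [mem_filter, mem_shortenedCode, union_subset_iff, and_assoc]
  calc ∑ x ∈ shortenedCode D, (#(zeros x) - #D).choose i
      = ∑ x ∈ shortenedCode D, #{T ∈ powersetCard i Dᶜ | T ⊆ zeros x} :=
        sum_congr rfl fun x hx ↦ hzeros hx
    _ = ∑ T ∈ powersetCard i Dᶜ, #{x ∈ shortenedCode D | T ⊆ zeros x} :=
        sum_card_bipartiteAbove_eq_sum_card_bipartiteBelow fun x T ↦ T ⊆ zeros x
    _ = ∑ T ∈ powersetCard i Dᶜ, #(shortenedCode (D ∪ T)) := by simp only [hcode]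

theorem sum_choose_card_zeros_mul {D : Finset (Coord V)} {i : ℕ}
    (h : 2 * (#D + i) < Fintype.card V) :
    (∑ x ∈ shortenedCode D, (#(zeros x) - #D).choose i) * (2 ^ (#D + i) * Fintype.card V) =
      (Fintype.card (Coord V) - #D).choose i * 2 ^ Fintype.card (Coord V) := by
  have hcode {T} (hT : T ∈ powersetCard i Dᶜ) :
      #(shortenedCode (D ∪ T)) * (2 ^ (#D + i) * Fintype.card V) =
        2 ^ Fintype.card (Coord V) := by
    obtain ⟨hTD, hTi⟩ := mem_powersetCard.1 hT
    have hcard : #(D ∪ T) = #D + i := by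
      rw [card_union_of_disjoint (subset_compl_iff_disjoint_left.1 hTD), hTi]
    rw [← hcard] at h ⊢
    exact card_shortenedCode h
  rw [sum_choose_card_zeros, sum_mul, sum_congr rfl fun T hT ↦ hcode hT, sum_const,
    card_powersetCard, card_compl, smul_eq_mul]

/-- The weight, in the fractional matching, of a codeword with `m` zeros outside the set on which it
is chosen to vanish. The coefficients solve the linear constraints expressed by `sum_weight` and
`choose_mul_weight_le`. -/
def weight (m : ℕ) : ℤ := 78 * m.choose 0 - 31 * m.choose 1 + 10 * m.choose 2 - 2 * m.choose 3

theorem sum_weight (hV : Fintype.card V = 16) {D : Finset (Coord V)} (hD : #D = 4) :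
    ∑ x ∈ shortenedCode D, weight (#(zeros x) - 4) = 480 := by
  set S : ℕ → ℕ := fun i ↦ ∑ x ∈ shortenedCode D, (#(zeros x) - 4).choose i
  have hmoment {i : ℕ} (hi : i < 4) : S i * 2 ^ i = 128 * Nat.choose 11 i := by
    have h := sum_choose_card_zeros_mul (D := D) (i := i) (by omega)
    rw [card_coord, hD, hV, pow_add] at h
    change S i * _ = Nat.choose 11 i * 2 ^ 15 at h
    linarith
  have h₀ : S 0 = 128 := by simpa using hmoment (i := 0) (by simp)
  have h₁ : S 1 * 2 = 128 * 11 := hmoment (i := 1) (by simp)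
  have h₂ : S 2 * 4 = 128 * 55 := hmoment (i := 2) (by simp)
  have h₃ : S 3 * 8 = 128 * 165 := hmoment (i := 3) (by simp)
  calc ∑ x ∈ shortenedCode D, weight (#(zeros x) - 4)
      = 78 * S 0 - 31 * S 1 + 10 * S 2 - 2 * S 3 := by
        simp only [weight, sum_add_distrib, sum_sub_distrib, mul_sum, S, Nat.cast_sum]
    _ = 480 := by omega

theorem choose_mul_weight_le : ∀ z ≤ 15, z.choose 4 * weight (z - 4) ≤ 480 := by decide

theorem card_filter_mem_shortenedCode {x : Coord V → ZMod 2} (hx : syndrome x = 0) (t : ℕ) :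
    #{D : {D : Finset (Coord V) // #D = t} | x ∈ shortenedCode D.1} = (#(zeros x)).choose t := by
  rw [← card_powersetCard, ← card_map (.subtype _)]
  congr 1
  ext D
  simp [mem_shortenedCode, hx, mem_powersetCard]

theorem exists_isCommitment (hV : Fintype.card V = 16) :
    ∃ w : Finset (Coord V) → Coord V → ZMod 2, IsCommitment 4 w := by
  have hright (x : Coord V → ZMod 2) :
      #{D : {D : Finset (Coord V) // #D = 4} | x ∈ shortenedCode D.1} * weight (#(zeros x) - 4) ≤
        480 := by
    by_cases hx : syndrome x = 0
    · rw [card_filter_mem_shortenedCode hx]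
      refine choose_mul_weight_le _ ((card_le_univ _).trans_eq ?_)
      rw [card_coord, hV]
    · simp [mem_shortenedCode, hx]
  obtain ⟨f, hf, hfD⟩ := exists_injective_of_fractional_matching
    (fun D : {D : Finset (Coord V) // #D = 4} ↦ shortenedCode D.1)
    (fun x ↦ weight (#(zeros x) - 4)) (by norm_num) (fun D ↦ (sum_weight hV D.2).ge) hright
  simp only [mem_shortenedCode] at hfD
  have extend_apply {D : Finset (Coord V)} (hD : #D = 4) :
      Function.extend Subtype.val f 0 D = f ⟨D, hD⟩ :=
    Subtype.val_injective.extend_apply f 0 ⟨D, hD⟩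
  refine ⟨Function.extend Subtype.val f 0, fun D hD D' hD' h ↦ ?_, fun D hD ↦ ?_, fun D hD ↦ ?_⟩
  · rw [extend_apply hD, extend_apply hD'] at h
    exact congrArg Subtype.val (hf h)
  · exact extend_apply hD ▸ (hfD ⟨D, hD⟩).1
  · exact extend_apply hD ▸ subset_zeros.1 (hfD ⟨D, hD⟩).2

end Hamming

theorem hasStrategy_fin_prod_coord {V : Type*} [Fintype V] [AddCommGroup V] [Module (ZMod 2) V]
    (hV : Fintype.card V = 16) : HasStrategy (Fin 11 × Coord V) 11 := by
  classical
  have hcoord : Fintype.card (Coord V) = 15 := by rw [card_coord, hV]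
  obtain ⟨w, hw⟩ := exists_isCommitment hV
  have hinner := hw.hasSteeredStrategy (by rw [hcoord]; norm_num)
  refine (hasWeightedStrategy_of_card ?_ ?_).prod hinner <;> simp [hcoord]

theorem gksCost_le_pow_clog [Fintype ι] {k n : ℕ} (h : HasStrategy ι k)
    (hι : 1 < Fintype.card ι) (hn : 0 < n) : gksCost n ≤ k ^ Nat.clog (Fintype.card ι) n := by
  have hcard : Fintype.card (Fin n) ≤
      Fintype.card (Fin (Nat.clog (Fintype.card ι) n) → ι) := by
    classical
    rw [Fintype.card_fin, Fintype.card_fun, Fintype.card_fin]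
    exact Nat.le_pow_clog hι n
  obtain ⟨f⟩ := Function.Embedding.nonempty_of_card_le hcard
  exact Nat.sInf_le (((h.pow _).of_embedding f).hasGKSStrategy hn)

theorem pow_clog_lt {b k n : ℕ} (hb : 1 < b) (hk : 1 < k) (hn : 0 < n) :
    (k : ℝ) ^ Nat.clog b n < k * (n : ℝ) ^ Real.logb b k := by
  have hb' : (1 : ℝ) < b := by exact_mod_cast hb
  have hk' : (1 : ℝ) < k := by exact_mod_cast hk
  have hclog : (b : ℝ) ^ Nat.clog b n < b * n := by
    rcases (Nat.succ_le_iff.2 hn).eq_or_lt with rfl | hn1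
    · simpa using hb'
    · have hpred : b ^ (Nat.clog b n - 1) < n := Nat.pow_pred_clog_lt_self hb hn1
      have hpos : 0 < Nat.clog b n := Nat.clog_pos hb hn1
      rw [← mul_pow_sub_one hpos.ne']
      gcongr
      exact_mod_cast hpred
  have hlogb : (b : ℝ) ^ Real.logb b k = k :=
    Real.rpow_logb (by positivity) hb'.ne' (by positivity)
  calc (k : ℝ) ^ Nat.clog b n = ((b : ℝ) ^ Nat.clog b n) ^ Real.logb b k := by
        rw [← Real.rpow_natCast_mul, mul_comm, Real.rpow_mul_natCast, hlogb] <;> positivity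
    _ < (b * n) ^ Real.logb b k := by
        gcongr
        exact Real.logb_pos hb' hk'
    _ = k * (n : ℝ) ^ Real.logb b k := by
        rw [Real.mul_rpow (by positivity) (by positivity), hlogb]

end GKS

/-- For every positive integer `n`, the cost of the GKS game on `n` variables
satisfies `C(n) < 11 * n ^ (log 11 / log 165)`, where the exponent is the
base-165 logarithm of 11 and the inequality is between real numbers. -/
theorem gks_cost_upper_bound (n : ℕ) (hn : 0 < n) :
    (gksCost n : ℝ) < 11 * (n : ℝ) ^ (Real.log 11 / Real.log 165) := by
  have hV : Fintype.card (Fin 4 → ZMod 2) = 16 := by simp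
  have hcard : Fintype.card (Fin 11 × GKS.Coord (Fin 4 → ZMod 2)) = 165 := by
    rw [Fintype.card_prod, Fintype.card_fin, GKS.card_coord, hV]
  have hcost : gksCost n ≤ 11 ^ Nat.clog 165 n :=
    hcard ▸ GKS.gksCost_le_pow_clog (GKS.hasStrategy_fin_prod_coord hV) (by simp [hcard]) hn
  calc (gksCost n : ℝ) ≤ 11 ^ Nat.clog 165 n := by exact_mod_cast hcost
    _ < 11 * (n : ℝ) ^ Real.logb 165 11 := by
        exact_mod_cast GKS.pow_clog_lt (b := 165) (k := 11) (by norm_num) (by norm_num) hn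
    _ = 11 * (n : ℝ) ^ (Real.log 11 / Real.log 165) := by rw [Real.log_div_log]
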